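/- Let p ∈ [0,1]^S and P = P_p. For every k ∈ {1,…,m} and every (v_1,…,v_{k−1}) ∈ ℝ^{k−1} such that Pr_{X∼P}[F(X,p)_j = v_j for all j < k] > 0, the conditional expectation satisfies E_{X∼P}[F(X,p)_k | F(X,p)_j = v_j for all j < k] = p_k. -/

import Mathlib

open scoped BigOperators Classical

/-- The index set `S` of parental configurations: pairs `(i, a)` where
`a : Parents i → Bool`. -/
abbrev BNIdx (d : ℕ) (Par : Fin d → Finset (Fin d)) :=
  (i : Fin d) × ({j : Fin d // j ∈ Par i} → Bool)

/-- The restriction of `x ∈ {0,1}^d` to the parents of node `i`. -/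
def cfgOf {d : ℕ} (Par : Fin d → Finset (Fin d)) (x : Fin d → Bool) (i : Fin d) :
    {j : Fin d // j ∈ Par i} → Bool :=
  fun j => x j.1

/-- The Bayesian network `P_p` with conditional probability table `p`. -/
noncomputable def bnDist {d : ℕ} (Par : Fin d → Finset (Fin d))
    (p : BNIdx d Par → ℝ) (x : Fin d → Bool) : ℝ :=
  ∏ i : Fin d, if x i then p ⟨i, cfgOf Par x i⟩ else 1 - p ⟨i, cfgOf Par x i⟩

/-- `Pr_R[Π_k]`, the probability of the parental configuration `k` under `R`. -/
noncomputable def prCfg {d : ℕ} (Par : Fin d → Finset (Fin d))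
    (R : (Fin d → Bool) → ℝ) (k : BNIdx d Par) : ℝ :=
  ∑ x : Fin d → Bool, if cfgOf Par x k.1 = k.2 then R x else 0

/-- Probability of an event `A` under `R`. -/
noncomputable def prEvent {d : ℕ} (R : (Fin d → Bool) → ℝ)
    (A : (Fin d → Bool) → Prop) : ℝ :=
  ∑ x : Fin d → Bool, if A x then R x else 0

/-- Expectation `E_{X ∼ R}[g(X)]`. -/
noncomputable def expec {d : ℕ} (R : (Fin d → Bool) → ℝ)
    (g : (Fin d → Bool) → ℝ) : ℝ :=
  ∑ x : Fin d → Bool, R x * g x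

/-- The vector `F(x, q) ∈ ℝ^S`. -/
noncomputable def Fvec {d : ℕ} (Par : Fin d → Finset (Fin d))
    (x : Fin d → Bool) (q : BNIdx d Par → ℝ) (k : BNIdx d Par) : ℝ :=
  if cfgOf Par x k.1 = k.2 then (if x k.1 then 1 else 0) else q k

/-- `R` is a probability distribution on the finite set `D`. -/
def IsProbDist {D : Type*} [Fintype D] (R : D → ℝ) : Prop :=
  (∀ x, 0 ≤ R x) ∧ ∑ x, R x = 1

/-- Total variation distance. -/
noncomputable def dTV {D : Type*} [Fintype D] (A B : D → ℝ) : ℝ :=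
  (∑ x, |A x - B x|) / 2

/-- Squared Hellinger distance `d_H(A,B)² = 1 - Σ √(A(x)·B(x))`. -/
noncomputable def hellingerSq {D : Type*} [Fintype D] (A B : D → ℝ) : ℝ :=
  1 - ∑ x, Real.sqrt (A x * B x)

/-- Euclidean norm on `ℝ^ι`. -/
noncomputable def enorm2 {ι : Type*} [Fintype ι] (v : ι → ℝ) : ℝ :=
  Real.sqrt (∑ k, v k ^ 2)

/-- The second-moment matrix `M_R` (relative to `q`). -/
noncomputable def covM {d : ℕ} (Par : Fin d → Finset (Fin d))
    (R : (Fin d → Bool) → ℝ) (q : BNIdx d Par → ℝ) :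
    Matrix (BNIdx d Par) (BNIdx d Par) ℝ :=
  fun k l => expec R (fun x => (Fvec Par x q k - q k) * (Fvec Par x q l - q l))

/-- `M_R^0`: the matrix `M_R` with zeroed diagonal. -/
noncomputable def covM0 {d : ℕ} (Par : Fin d → Finset (Fin d))
    (R : (Fin d → Bool) → ℝ) (q : BNIdx d Par → ℝ) :
    Matrix (BNIdx d Par) (BNIdx d Par) ℝ :=
  fun k l => if k = l then 0 else covM Par R q k l

/-- Spectral norm (ℓ²-operator norm) of a real matrix. -/
noncomputable def specNorm {ι : Type*} [Fintype ι] [DecidableEq ι]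
    (M : Matrix ι ι ℝ) : ℝ :=
  ‖Matrix.toEuclideanCLM (𝕜 := ℝ) M‖


/-- Lexicographic order on parental configurations of a fixed node
(`Bool` ordered by `false < true`, coordinates compared in increasing order). -/
def cfgLt {d : ℕ} (Par : Fin d → Finset (Fin d)) (i : Fin d)
    (a b : {j : Fin d // j ∈ Par i} → Bool) : Prop :=
  ∃ j, (∀ j', j' < j → a j' = b j') ∧ a j < b j

/-- The lexicographic order on the index set `S`: first compare the node,
then the configuration. -/
def idxLt {d : ℕ} (Par : Fin d → Finset (Fin d)) (k l : BNIdx d Par) : Prop :=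
  k.1 < l.1 ∨ ∃ h : k.1 = l.1, cfgLt Par l.1 (h ▸ k.2) l.2


def flipAt {d : ℕ} (n : Fin d) (x : Fin d → Bool) : Fin d → Bool :=
  Function.update x n (!x n)

theorem flipAt_invol {d : ℕ} (n : Fin d) : Function.Involutive (flipAt n) := by
  intro x
  simp [flipAt]

theorem flipAt_sum {d : ℕ} (n : Fin d) (f : (Fin d → Bool) → ℝ) :
    ∑ x, f (flipAt n x) = ∑ x, f x :=
  Equiv.sum_comp (flipAt_invol n).toPerm f

noncomputable def fac {d : ℕ} (Par : Fin d → Finset (Fin d))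
    (p : BNIdx d Par → ℝ) (x : Fin d → Bool) (i : Fin d) : ℝ :=
  if x i then p ⟨i, cfgOf Par x i⟩ else 1 - p ⟨i, cfgOf Par x i⟩

theorem flipAt_of_lt {d : ℕ} {n j : Fin d} (h : j < n) (x : Fin d → Bool) :
    flipAt n x j = x j := by
  simp [flipAt, Function.update_of_ne h.ne]

theorem cfgOf_congr {d : ℕ} (Par : Fin d → Finset (Fin d))
    (hpar : ∀ i : Fin d, ∀ j ∈ Par i, j < i) (i : Fin d) (x y : Fin d → Bool)
    (h : ∀ j, j < i → x j = y j) : cfgOf Par x i = cfgOf Par y i := by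
  funext j
  exact h _ (hpar i _ j.2)

theorem cfgOf_flip {d : ℕ} (Par : Fin d → Finset (Fin d))
    (hpar : ∀ i : Fin d, ∀ j ∈ Par i, j < i) {i n : Fin d} (h : i ≤ n) (x : Fin d → Bool) :
    cfgOf Par (flipAt n x) i = cfgOf Par x i :=
  cfgOf_congr Par hpar i _ _ fun _ hj => flipAt_of_lt (hj.trans_le h) x

theorem fac_flip_lt {d : ℕ} (Par : Fin d → Finset (Fin d))
    (hpar : ∀ i : Fin d, ∀ j ∈ Par i, j < i) (p : BNIdx d Par → ℝ)
    {i n : Fin d} (h : i < n) (x : Fin d → Bool) :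
    fac Par p (flipAt n x) i = fac Par p x i := by
  simp only [fac, cfgOf_flip Par hpar h.le, flipAt_of_lt h]

theorem fac_flip_self {d : ℕ} (Par : Fin d → Finset (Fin d))
    (hpar : ∀ i : Fin d, ∀ j ∈ Par i, j < i) (p : BNIdx d Par → ℝ)
    (n : Fin d) (x : Fin d → Bool) :
    fac Par p (flipAt n x) n = 1 - fac Par p x n := by
  simp only [fac, cfgOf_flip Par hpar le_rfl]
  cases hx : x n <;> simp [flipAt, hx]

noncomputable def pprod {d : ℕ} (Par : Fin d → Finset (Fin d))
    (p : BNIdx d Par → ℝ) (n : ℕ) (x : Fin d → Bool) : ℝ :=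
  ∏ j ∈ Finset.univ.filter (fun j : Fin d => j.val < n), fac Par p x j

theorem pprod_succ {d : ℕ} (Par : Fin d → Finset (Fin d))
    (p : BNIdx d Par → ℝ) (n : Fin d) (x : Fin d → Bool) :
    pprod Par p (n.val + 1) x = fac Par p x n * pprod Par p n.val x := by
  have : Finset.univ.filter (fun j : Fin d => j.val < n.val + 1)
      = insert n (Finset.univ.filter (fun j : Fin d => j.val < n.val)) := by
    ext j
    simp [Fin.ext_iff]
    omega
  unfold pprod
  rw [this, Finset.prod_insert (by simp)]

theorem pprod_flip {d : ℕ} (Par : Fin d → Finset (Fin d))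
    (hpar : ∀ i : Fin d, ∀ j ∈ Par i, j < i) (p : BNIdx d Par → ℝ)
    (n : Fin d) (x : Fin d → Bool) :
    pprod Par p n.val (flipAt n x) = pprod Par p n.val x := by
  unfold pprod
  refine Finset.prod_congr rfl fun j hj => ?_
  simp only [Finset.mem_filter, Finset.mem_univ, true_and] at hj
  exact fac_flip_lt Par hpar p hj x

theorem sum_pprod_zero {d : ℕ} (Par : Fin d → Finset (Fin d))
    (hpar : ∀ i : Fin d, ∀ j ∈ Par i, j < i) (p : BNIdx d Par → ℝ)
    (i : Fin d) (g : (Fin d → Bool) → ℝ)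
    (hg : ∀ x y : Fin d → Bool, (∀ j, j < i → x j = y j) → g x = g y)
    (n : ℕ) (hn : i.val + 1 ≤ n) (hnd : n ≤ d) :
    ∑ x, pprod Par p n x * (g x * ((if x i then 1 else 0) - p ⟨i, cfgOf Par x i⟩)) = 0 := by
  have hgf : ∀ m : Fin d, i ≤ m → ∀ x, g (flipAt m x) = g x := fun m hm x =>
    hg _ _ fun j hj => flipAt_of_lt (hj.trans_le hm) x
  induction n, hn using Nat.le_induction with
  | base =>
    have h := flipAt_sum i (fun x => pprod Par p (i.val + 1) x *
      (g x * ((if x i then 1 else 0) - p ⟨i, cfgOf Par x i⟩)))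
    have h2 : ∑ x, (pprod Par p (i.val + 1) (flipAt i x) *
        (g (flipAt i x) * ((if flipAt i x i then 1 else 0) - p ⟨i, cfgOf Par (flipAt i x) i⟩))
        + pprod Par p (i.val + 1) x *
        (g x * ((if x i then 1 else 0) - p ⟨i, cfgOf Par x i⟩))) = 0 := by
      refine Finset.sum_eq_zero fun x _ => ?_
      rw [pprod_succ, pprod_succ, pprod_flip Par hpar, hgf i le_rfl, cfgOf_flip Par hpar le_rfl,
        fac_flip_self Par hpar]
      cases hx : x i <;> simp [flipAt, hx, fac] <;> ring
    rw [Finset.sum_add_distrib] at h2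
    linarith
  | succ n hn ih =>
    have ih := ih (by omega)
    let m : Fin d := ⟨n, by omega⟩
    have him : i < m := hn
    have h := flipAt_sum m (fun x => pprod Par p (m.val + 1) x *
      (g x * ((if x i then 1 else 0) - p ⟨i, cfgOf Par x i⟩)))
    have h2 : ∑ x, (pprod Par p (m.val + 1) (flipAt m x) *
        (g (flipAt m x) * ((if flipAt m x i then 1 else 0) - p ⟨i, cfgOf Par (flipAt m x) i⟩))
        + pprod Par p (m.val + 1) x *
        (g x * ((if x i then 1 else 0) - p ⟨i, cfgOf Par x i⟩))) = 0 := by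
      refine Eq.trans (Finset.sum_congr rfl fun x _ => ?_) ih
      change _ = pprod Par p m.val x * _
      rw [pprod_succ, pprod_succ, pprod_flip Par hpar, hgf m him.le, cfgOf_flip Par hpar him.le,
        fac_flip_self Par hpar, flipAt_of_lt him]
      ring
    rw [Finset.sum_add_distrib] at h2
    change ∑ x, pprod Par p (m.val + 1) x * _ = 0
    linarith

theorem past_local {d : ℕ} (Par : Fin d → Finset (Fin d))
    (hpar : ∀ i : Fin d, ∀ j ∈ Par i, j < i) (p : BNIdx d Par → ℝ)
    (k : BNIdx d Par) (v : BNIdx d Par → ℝ) (x y : Fin d → Bool)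
    (hxy : ∀ j, j < k.1 → x j = y j)
    (h : (∀ k' : BNIdx d Par, idxLt Par k' k → Fvec Par x p k' = v k') ∧
      cfgOf Par x k.1 = k.2) :
    (∀ k' : BNIdx d Par, idxLt Par k' k → Fvec Par y p k' = v k') ∧
      cfgOf Par y k.1 = k.2 := by
  obtain ⟨hA, hc⟩ := h
  have hc' : cfgOf Par y k.1 = k.2 := by
    rw [← hc]; exact (cfgOf_congr Par hpar _ _ _ hxy).symm
  refine ⟨fun k' hk' => ?_, hc'⟩
  rw [← hA k' hk']
  obtain ⟨i, a⟩ := k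
  obtain ⟨j, b⟩ := k'
  rcases hk' with hlt | ⟨heq, hlt⟩
  · have := cfgOf_congr Par hpar j x y fun l hl => hxy l (hl.trans hlt)
    simp only [Fvec]
    rw [this, hxy j hlt]
  · dsimp only at heq
    subst heq
    have hne : a ≠ b := by
      rintro rfl
      obtain ⟨l, _, hl⟩ := hlt
      exact lt_irrefl _ hl
    dsimp only at hc hc'
    simp only [Fvec, hc, hc', if_neg hne]

theorem cond_mean_of_Fvec_given_past
    (d : ℕ) (hd : 1 ≤ d) (Par : Fin d → Finset (Fin d))
    (hpar : ∀ i : Fin d, ∀ j ∈ Par i, j < i)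
    (p : BNIdx d Par → ℝ) (hp : ∀ k, p k ∈ Set.Icc (0:ℝ) 1)
    (k : BNIdx d Par) (v : BNIdx d Par → ℝ)
    (hpos : 0 < prEvent (bnDist Par p)
      (fun x => ∀ k' : BNIdx d Par, idxLt Par k' k → Fvec Par x p k' = v k')) :
    (∑ x : Fin d → Bool,
        if ∀ k' : BNIdx d Par, idxLt Par k' k → Fvec Par x p k' = v k' then
          bnDist Par p x * Fvec Par x p k
        else 0) /
      prEvent (bnDist Par p)
        (fun x => ∀ k' : BNIdx d Par, idxLt Par k' k → Fvec Par x p k' = v k')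
    = p k := by
  rw [div_eq_iff hpos.ne']
  have key := sum_pprod_zero Par hpar p k.1
    (fun x => if (∀ k' : BNIdx d Par, idxLt Par k' k → Fvec Par x p k' = v k') ∧
      cfgOf Par x k.1 = k.2 then 1 else 0)
    (fun x y hxy => if_congr ⟨past_local Par hpar p k v x y hxy,
      past_local Par hpar p k v y x fun j hj => (hxy j hj).symm⟩ rfl rfl)
    d k.1.isLt le_rfl
  have hP : ∀ x, pprod Par p d x = bnDist Par p x := by
    intro x
    simp [pprod, bnDist, fac]
  unfold prEvent
  rw [← sub_eq_zero, Finset.mul_sum, ← Finset.sum_sub_distrib]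
  refine Eq.trans (Finset.sum_congr rfl fun x _ => ?_) key
  rw [hP]
  by_cases hA : ∀ k' : BNIdx d Par, idxLt Par k' k → Fvec Par x p k' = v k'
  · by_cases hc : cfgOf Par x k.1 = k.2
    · rw [if_pos hA, if_pos hA, if_pos ⟨hA, hc⟩, hc]
      simp only [Fvec, if_pos hc]
      ring
    · rw [if_pos hA, if_pos hA, if_neg (fun h => hc h.2)]
      simp only [Fvec, if_neg hc]
      ring
  · rw [if_neg hA, if_neg hA, if_neg (fun h => hA h.1)]
    ring
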